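/- Let f be a non-constant meromorphic function on ℂ of finite order, let c ∈ ℂ and let δ < 1. Then m(r, f(z+c)/f(z)) = o( T(r+|c|, f) / r^δ ) as r → ∞, for all r outside a possible exceptional set of finite logarithmic measure. -/

import Mathlib

/-!
If `f` is constant on a codiscrete set, then `m(r, f(z + c) / f(z)) = 0`. Otherwise, on a disc of
radius `R`, `log ‖f‖` is a finite sum of terms `d u * log ‖z - u‖` over the zeros and poles `u`,
plus a harmonic function `h`. On the circle of radius `r`, the difference `h (z + c) - h z` is
controlled by the difference of two Herglotz–Riesz kernels, of size `R / (R - r - ‖c‖) ^ 2`, while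
each `log ‖z + c - u‖ - log ‖z - u‖` is dominated by `‖z - u‖ ^ (-s)` and `‖z + c - u‖ ^ (-s)`,
whose circle averages are `O(r ^ (-s))` for every `s < 1`. The number of zeros and poles is bounded
through the integrated counting functions at a slightly larger radius `R'`.

With `ρ = r + ‖c‖`, `R = ρ + ρ ^ (1 - ε) / 2`, `R' = ρ + ρ ^ (1 - ε)` and `s = 1 - ε`, this bounds
`m(r, f(z + c) / f(z))` by a constant times `T(R', f) * r ^ (4 * ε - 1)`. Finally a Borel-type
growth lemma gives `T(ρ + ρ ^ (1 - ε)) ≤ 2 * T(ρ)` outside a set of finite logarithmic measure,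
because `T` grows at most polynomially.
-/

open MeasureTheory Filter Topology Metric

noncomputable section

/-- Positive part of the logarithm: `log⁺ x = max (log x) 0`. -/
def logPlus (x : ℝ) : ℝ := max (Real.log x) 0

/-- The point `r e^{iθ}` on the circle of radius `r`. -/
def circ (r θ : ℝ) : ℂ := (r : ℂ) * Complex.exp (θ * Complex.I)

/-- Nevanlinna proximity function `m(r, f)`. -/
def nevm (f : ℂ → ℂ) (r : ℝ) : ℝ :=
  (2 * Real.pi)⁻¹ * ∫ θ in (0:ℝ)..(2 * Real.pi), logPlus ‖f (circ r θ)‖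

/-- Order of the pole of `f` at `x` (`0` if `f` extends analytically over `x`);
determined through the punctured neighbourhood of `x`. -/
def poleOrd (f : ℂ → ℂ) (x : ℂ) : ℕ :=
  sInf {n : ℕ | ∃ g : ℂ → ℂ, AnalyticAt ℂ g x ∧
    ∀ᶠ w in 𝓝[≠] x, (w - x) ^ n * f w = g w}

/-- Unintegrated counting function `n(r, f)`: number of poles of `f` in `|z| ≤ r`,
counted with multiplicity. -/
def nevn (f : ℂ → ℂ) (r : ℝ) : ℕ := ∑ᶠ z ∈ closedBall (0:ℂ) r, poleOrd f z

/-- Integrated counting function `N(r, f)`. -/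
def nevN (f : ℂ → ℂ) (r : ℝ) : ℝ :=
  (∫ t in (0:ℝ)..r, ((nevn f t : ℝ) - (nevn f 0 : ℝ)) / t) + (nevn f 0 : ℝ) * Real.log r

/-- Nevanlinna characteristic `T(r, f) = m(r, f) + N(r, f)`. -/
def nevT (f : ℂ → ℂ) (r : ℝ) : ℝ := nevm f r + nevN f r

/-- A subset of `(0, ∞)` has finite logarithmic measure: `∫_E dr/r < ∞`. -/
def FinLogMeasure (E : Set ℝ) : Prop :=
  E ⊆ Set.Ioi 0 ∧ ∫⁻ r in E, ENNReal.ofReal r⁻¹ < ⊤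

/-- `f` is a non-constant function. -/
def Nonconstant (f : ℂ → ℂ) : Prop := ¬ ∃ a : ℂ, ∀ z : ℂ, f z = a

/-- `f` has finite order: `limsup_{r→∞} log T(r,f) / log r < ∞`. -/
def FiniteOrder (f : ℂ → ℂ) : Prop :=
  IsBoundedUnder (· ≤ ·) atTop fun r : ℝ => Real.log (nevT f r) / Real.log r

end

open Real

theorem FinLogMeasure.exists_tendsto_add_const {E : Set ℝ} (hE : FinLogMeasure E) {a : ℝ}
    (ha : 0 ≤ a) :
    ∃ F, FinLogMeasure F ∧ Tendsto (· + a) (atTop ⊓ 𝓟 Fᶜ) (atTop ⊓ 𝓟 Eᶜ) := by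
  refine ⟨{r | 0 < r ∧ a ≤ r ∧ r + a ∈ E}, ⟨fun r hr => hr.1, ?_⟩, ?_⟩
  · calc
      ∫⁻ r in {r | 0 < r ∧ a ≤ r ∧ r + a ∈ E}, ENNReal.ofReal r⁻¹
        ≤ ∫⁻ r in {r | 0 < r ∧ a ≤ r ∧ r + a ∈ E}, 2 * ENNReal.ofReal (r + a)⁻¹ := by
          refine setLIntegral_mono_ae (by fun_prop) (.of_forall fun r ⟨hr, har, _⟩ => ?_)
          rw [← ENNReal.ofReal_ofNat, ← ENNReal.ofReal_mul zero_le_two]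
          refine ENNReal.ofReal_le_ofReal ?_
          rw [← div_eq_mul_inv, ← one_div, div_le_div_iff₀ hr (by positivity)]
          linarith
      _ ≤ ∫⁻ r in (· + a) ⁻¹' E, 2 * ENNReal.ofReal (r + a)⁻¹ :=
          lintegral_mono_set fun r hr => hr.2.2
      _ = ∫⁻ r in E, 2 * ENNReal.ofReal r⁻¹ :=
          (measurePreserving_add_right volume a).setLIntegral_comp_preimage_emb
            (measurableEmbedding_addRight a) (fun r => 2 * ENNReal.ofReal r⁻¹) E
      _ < ⊤ := by
          rw [lintegral_const_mul _ (by fun_prop)]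
          exact ENNReal.mul_lt_top ENNReal.ofNat_lt_top hE.2
  · refine tendsto_inf.2 ⟨(tendsto_atTop_add_const_right _ a tendsto_id).mono_left inf_le_left, ?_⟩
    refine tendsto_principal.2 (eventually_inf_principal.2 ?_)
    filter_upwards [eventually_gt_atTop 0, eventually_ge_atTop a] with r hr har hrF hrE
    exact hrF ⟨hr, har, hrE⟩

theorem setLIntegral_inv_le_of_forall_lt_add_rpow {E : Set ℝ} {ε : ℝ} (hε : 0 ≤ ε) (hε1 : ε ≤ 1)
    (hE : ∀ r ∈ E, 1 ≤ r) (hgap : ∀ r ∈ E, ∀ r' ∈ E, r' < r + r ^ (1 - ε)) {x : ℝ} (hx : x ∈ E) :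
    ∫⁻ r in E, ENNReal.ofReal r⁻¹ ≤ ENNReal.ofReal (4 * x ^ (-ε)) := by
  have hx0 : 0 < x := zero_lt_one.trans_le (hE x hx)
  have hsub : E ⊆ Set.Ioo (x - x ^ (1 - ε)) (x + x ^ (1 - ε)) := fun r hr => by
    refine ⟨?_, hgap x hx r hr⟩
    rcases le_total r x with h | h
    · have := rpow_le_rpow (zero_le_one.trans (hE r hr)) h (sub_nonneg.2 hε1)
      linarith [hgap r hr x hx]
    · linarith [rpow_pos_of_pos hx0 (1 - ε)]
  have hinv : ∀ r ∈ E, r⁻¹ ≤ 2 / x := fun r hr => by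
    have hr1 := hE r hr
    have : r ^ (1 - ε) ≤ r := rpow_le_self_of_one_le hr1 (by linarith)
    rw [← one_div, div_le_div_iff₀ (by positivity) hx0]
    linarith [hgap r hr x hx]
  calc
    ∫⁻ r in E, ENNReal.ofReal r⁻¹
      ≤ ∫⁻ _ in E, ENNReal.ofReal (2 / x) :=
        setLIntegral_mono_ae (by fun_prop)
          (.of_forall fun r hr => ENNReal.ofReal_le_ofReal (hinv r hr))
    _ ≤ ∫⁻ _ in Set.Ioo (x - x ^ (1 - ε)) (x + x ^ (1 - ε)), ENNReal.ofReal (2 / x) :=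
        lintegral_mono_set hsub
    _ = ENNReal.ofReal (4 * x ^ (-ε)) := by
        rw [setLIntegral_const, volume_Ioo, ← ENNReal.ofReal_mul (by positivity),
          sub_eq_add_neg 1 ε, rpow_add hx0, rpow_one]
        congr 1
        field_simp
        ring

theorem setLIntegral_inv_le_of_two_pow_le {T : ℝ → ℝ} {E : Set ℝ} {K ε : ℝ} (hK : 0 < K)
    (hε : 0 ≤ ε) (hε1 : ε ≤ 1) (hE : ∀ r ∈ E, 1 ≤ r) (hgrowth : ∀ r ∈ E, T r ≤ r ^ K)
    (hgap : ∀ r ∈ E, ∀ r' ∈ E, r' < r + r ^ (1 - ε)) {n : ℕ} (hn : ∀ r ∈ E, 2 ^ n ≤ T r) :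
    ∫⁻ r in E, ENNReal.ofReal r⁻¹ ≤ ENNReal.ofReal (4 * ((2 : ℝ) ^ (-(ε / K))) ^ n) := by
  rcases E.eq_empty_or_nonempty with hempty | ⟨x, hx⟩
  · simp [hempty]
  refine (setLIntegral_inv_le_of_forall_lt_add_rpow hε hε1 hE hgap hx).trans
    (ENNReal.ofReal_le_ofReal ?_)
  have hx0 : 0 < x := zero_lt_one.trans_le (hE x hx)
  gcongr
  calc
    x ^ (-ε) = (x ^ K) ^ (-(ε / K)) := by
      rw [← rpow_mul hx0.le]
      congr 1
      field_simp
    _ ≤ ((2 : ℝ) ^ n) ^ (-(ε / K)) :=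
      rpow_le_rpow_of_nonpos (by positivity) ((hn x hx).trans (hgrowth x hx))
        (neg_nonpos.2 (by positivity))
    _ = ((2 : ℝ) ^ (-(ε / K))) ^ n := by
      rw [← rpow_natCast, ← rpow_natCast, ← rpow_mul zero_le_two,
        ← rpow_mul zero_le_two, mul_comm]

/- `E` is cut into the pieces on which `T` lies between consecutive powers of `2`. Two points
`r < r'` of a piece satisfy `r' < r + r ^ (1 - ε)`, so each piece is short, and the polynomial
growth of `T` makes the logarithmic lengths of the pieces decay geometrically. -/
theorem finLogMeasure_of_two_mul_le {T : ℝ → ℝ} {E : Set ℝ} {K ε : ℝ} (hK : 0 < K)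
    (hε : 0 < ε) (hε1 : ε ≤ 1) (hE : ∀ r ∈ E, 1 ≤ r) (hone : ∀ r ∈ E, 1 ≤ T r)
    (hgrowth : ∀ r ∈ E, T r ≤ r ^ K)
    (hgap : ∀ r ∈ E, ∀ r' ∈ E, r + r ^ (1 - ε) ≤ r' → 2 * T r ≤ T r') : FinLogMeasure E := by
  let piece (n : ℕ) : Set ℝ := E ∩ T ⁻¹' Set.Ico (2 ^ n) (2 ^ (n + 1))
  have hcover : E ⊆ ⋃ n, piece n := fun r hr => by
    obtain ⟨n, hn⟩ := exists_nat_pow_near (hone r hr) one_lt_two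
    exact Set.mem_iUnion.2 ⟨n, hr, hn⟩
  have hpiece : ∀ n, ∫⁻ r in piece n, ENNReal.ofReal r⁻¹ ≤
      ENNReal.ofReal (4 * ((2 : ℝ) ^ (-(ε / K))) ^ n) := fun n => by
    refine setLIntegral_inv_le_of_two_pow_le (T := T) hK hε.le hε1 (fun r hr => hE r hr.1)
      (fun r hr => hgrowth r hr.1) ?_ fun r hr => hr.2.1
    rintro r ⟨hr, hn, -⟩ r' ⟨hr', -, hn'⟩
    by_contra! hle
    linarith [hgap r hr r' hr' hle, pow_succ (2 : ℝ) n]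
  have hsum : Summable fun n : ℕ => 4 * ((2 : ℝ) ^ (-(ε / K))) ^ n :=
    (summable_geometric_of_lt_one (by positivity)
      (rpow_lt_one_of_one_lt_of_neg one_lt_two (neg_neg_of_pos (by positivity)))).mul_left 4
  refine ⟨fun r hr => zero_lt_one.trans_le (hE r hr), ?_⟩
  calc
    ∫⁻ r in E, ENNReal.ofReal r⁻¹
      ≤ ∫⁻ r in ⋃ n, piece n, ENNReal.ofReal r⁻¹ := lintegral_mono_set hcover
    _ ≤ ∑' n, ∫⁻ r in piece n, ENNReal.ofReal r⁻¹ := lintegral_iUnion_le _ _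
    _ ≤ ∑' n : ℕ, ENNReal.ofReal (4 * ((2 : ℝ) ^ (-(ε / K))) ^ n) := ENNReal.tsum_le_tsum hpiece
    _ < ⊤ := hsum.tsum_ofReal_lt_top

theorem exists_finLogMeasure_apply_add_rpow_le_two_mul {T : ℝ → ℝ} {K ε : ℝ} (hK : 0 < K)
    (hε : 0 < ε) (hε1 : ε ≤ 1) (hmono : MonotoneOn T (Set.Ioi 0)) (hone : ∀ᶠ r in atTop, 1 ≤ T r)
    (hgrowth : ∀ᶠ r in atTop, T r ≤ r ^ K) :
    ∃ E, FinLogMeasure E ∧ ∀ᶠ r in atTop ⊓ 𝓟 Eᶜ, T (r + r ^ (1 - ε)) ≤ 2 * T r := by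
  obtain ⟨r₀, hr₀⟩ := eventually_atTop.1 ((hone.and hgrowth).and (eventually_ge_atTop 1))
  refine ⟨{r | r₀ ≤ r ∧ 2 * T r < T (r + r ^ (1 - ε))},
    finLogMeasure_of_two_mul_le hK hε hε1 (fun r hr => (hr₀ r hr.1).2)
      (fun r hr => (hr₀ r hr.1).1.1) (fun r hr => (hr₀ r hr.1).1.2) ?_,
    eventually_inf_principal.2 ?_⟩
  · rintro r ⟨hr, hdouble⟩ r' - hle
    have hr0 : 0 < r := zero_lt_one.trans_le (hr₀ r hr).2
    have hpos : 0 < r + r ^ (1 - ε) := by positivity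
    exact hdouble.le.trans (hmono hpos (hpos.trans_le hle) hle)
  · filter_upwards [eventually_ge_atTop r₀] with r hr hrE
    exact not_lt.1 fun h => hrE ⟨hr, h⟩

theorem ae_circleMap_notMem {X : Set ℂ} (hX : X.Countable) (a : ℂ) {R : ℝ} (hR : R ≠ 0) :
    ∀ᵐ θ, circleMap a R θ ∉ X :=
  measure_eq_zero_iff_ae_notMem.1 ((hX.preimage_circleMap a hR).measure_zero _)

theorem circleAverage_mono_of_countable {f g : ℂ → ℝ} {a : ℂ} {R : ℝ} {X : Set ℂ}
    (hX : X.Countable) (hR : R ≠ 0) (hf : CircleIntegrable f a R) (hg : CircleIntegrable g a R)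
    (h : ∀ z ∈ sphere a |R|, z ∉ X → f z ≤ g z) : circleAverage f a R ≤ circleAverage g a R := by
  refine smul_le_smul_of_nonneg_left ?_ (by positivity)
  refine intervalIntegral.integral_mono_ae (by positivity) hf hg ?_
  filter_upwards [ae_circleMap_notMem hX a hR] with θ hθ
  exact h _ (circleMap_mem_sphere' a R θ) hθ

theorem intervalIntegrable_abs_rpow {p : ℝ} (hp : -1 < p) (a b : ℝ) :
    IntervalIntegrable (fun x => |x| ^ p) volume a b := by
  have h := (intervalIntegral.intervalIntegrable_cpow' (a := a) (b := b) (r := p) (by simpa)).norm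
  refine h.congr_ae (.of_forall fun x => ?_)
  simp [Complex.norm_cpow_real]

theorem intervalIntegrable_abs_sin_rpow {p : ℝ} (hp : -1 < p) (hp0 : p < 0) (a b : ℝ) :
    IntervalIntegrable (fun θ => |sin θ| ^ p) volume a b := by
  have hperiodic : Function.Periodic (fun θ => |sin θ| ^ p) π := fun θ => by simp
  refine hperiodic.intervalIntegrable (t := -(π / 2)) pi_ne_zero ?_ a b
  refine ((intervalIntegrable_abs_rpow hp _ _).const_mul ((2 / π) ^ p)).mono_fun'
    (Measurable.aestronglyMeasurable (by fun_prop)) ?_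
  refine (ae_restrict_iff' measurableSet_uIoc).2 (.of_forall fun θ hθ => ?_)
  rw [Set.uIoc_of_le (by linarith [pi_pos])] at hθ
  have habs : |θ| ≤ π / 2 := abs_le.2 ⟨hθ.1.le, by linarith [hθ.2]⟩
  simp only [norm_of_nonneg (rpow_nonneg (abs_nonneg _) p)]
  rw [← mul_rpow (by positivity) (abs_nonneg θ)]
  rcases eq_or_ne θ 0 with rfl | hθ0
  · simp
  · exact rpow_le_rpow_of_nonpos (by positivity) (mul_abs_le_abs_sin habs) hp0.le

/- After the rotation by `arg a`, the centre `a` lies on the positive real axis. -/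
theorem mul_abs_sin_le_norm_circleMap_add_arg_sub {r : ℝ} (hr : 0 ≤ r) (a : ℂ) (θ : ℝ) :
    r * |sin θ| ≤ ‖circleMap 0 r (θ + a.arg) - a‖ := by
  have hrotate : circleMap 0 r (θ + a.arg) - a =
      (circleMap 0 r θ - ‖a‖) * Complex.exp (a.arg * Complex.I) := by
    rw [sub_mul, Complex.norm_mul_exp_arg_mul_I]
    simp [circleMap, add_mul, Complex.exp_add, mul_assoc]
  rw [hrotate, norm_mul, Complex.norm_exp_ofReal_mul_I, mul_one]
  refine (le_of_eq ?_).trans (Complex.abs_im_le_norm _)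
  simp [circleMap, Complex.exp_ofReal_mul_I_im, abs_mul, abs_of_nonneg hr]

theorem ae_norm_circleMap_add_arg_sub_rpow_le {p r : ℝ} (hp0 : p < 0) (hr : 0 < r) (a : ℂ) :
    ∀ᵐ θ, ‖circleMap 0 r (θ + a.arg) - a‖ ^ p ≤ r ^ p * |sin θ| ^ p := by
  have hcountable : {θ : ℝ | sin θ = 0}.Countable :=
    (Set.countable_range fun n : ℤ => n * π).mono fun θ => sin_eq_zero_iff.1
  filter_upwards [hcountable.ae_notMem volume] with θ hθ
  have hsin : 0 < |sin θ| := abs_pos.2 hθ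
  rw [← mul_rpow hr.le hsin.le]
  exact rpow_le_rpow_of_nonpos (by positivity)
    (mul_abs_sin_le_norm_circleMap_add_arg_sub hr.le a θ) hp0.le

theorem intervalIntegrable_norm_circleMap_add_arg_sub_rpow {p r : ℝ} (hp : -1 < p) (hp0 : p < 0)
    (hr : 0 < r) (a : ℂ) (s t : ℝ) :
    IntervalIntegrable (fun θ => ‖circleMap 0 r (θ + a.arg) - a‖ ^ p) volume s t := by
  refine ((intervalIntegrable_abs_sin_rpow hp hp0 s t).const_mul (r ^ p)).mono_fun'
    (Measurable.aestronglyMeasurable (by fun_prop)) (ae_restrict_of_ae ?_)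
  filter_upwards [ae_norm_circleMap_add_arg_sub_rpow_le hp0 hr a] with θ hθ
  rwa [norm_of_nonneg (by positivity)]

theorem circleIntegrable_norm_sub_rpow {p r : ℝ} (hp : -1 < p) (hp0 : p < 0) (hr : 0 < r) (a : ℂ) :
    CircleIntegrable (fun z => ‖z - a‖ ^ p) 0 r := by
  have h := (intervalIntegrable_norm_circleMap_add_arg_sub_rpow hp hp0 hr a
    (-a.arg) (2 * π - a.arg)).comp_sub_right a.arg
  simpa [CircleIntegrable] using h

theorem circleAverage_norm_sub_rpow_le {p r : ℝ} (hp : -1 < p) (hp0 : p < 0) (hr : 0 < r) (a : ℂ) :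
    circleAverage (fun z => ‖z - a‖ ^ p) 0 r ≤
      r ^ p * ((2 * π)⁻¹ * ∫ θ in 0..2 * π, |sin θ| ^ p) := by
  rw [circleAverage_eq_integral_add a.arg, smul_eq_mul, mul_left_comm,
    ← intervalIntegral.integral_const_mul (r ^ p)]
  refine mul_le_mul_of_nonneg_left (intervalIntegral.integral_mono_ae two_pi_pos.le
    (intervalIntegrable_norm_circleMap_add_arg_sub_rpow hp hp0 hr a _ _)
    ((intervalIntegrable_abs_sin_rpow hp hp0 _ _).const_mul _)
    (ae_norm_circleMap_add_arg_sub_rpow_le hp0 hr a)) (inv_nonneg.2 two_pi_pos.le)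

theorem norm_herglotzRieszKernel_sub_le {a v w ζ : ℂ} {ρ R : ℝ} (hv : v ∈ closedBall a ρ)
    (hw : w ∈ closedBall a ρ) (hρ : ρ < R) (hζ : ζ ∈ sphere a R) :
    ‖herglotzRieszKernel a v ζ - herglotzRieszKernel a w ζ‖ ≤ 2 * R * ‖v - w‖ / (R - ρ) ^ 2 := by
  have hgap : ∀ u ∈ closedBall a ρ, R - ρ ≤ ‖ζ - u‖ := fun u hu => by
    rw [← dist_eq_norm]
    linarith [mem_sphere.1 hζ, mem_closedBall.1 hu, dist_triangle_right ζ a u,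
      dist_triangle ζ u a]
  have hpos : 0 < R - ρ := sub_pos.2 hρ
  have hv0 : ζ - v ≠ 0 := norm_pos_iff.1 (hpos.trans_le (hgap v hv))
  have hw0 : ζ - w ≠ 0 := norm_pos_iff.1 (hpos.trans_le (hgap w hw))
  have hdiff : herglotzRieszKernel a v ζ - herglotzRieszKernel a w ζ =
      2 * (ζ - a) * (v - w) / ((ζ - v) * (ζ - w)) := by
    simp only [herglotzRieszKernel_def, sub_sub_sub_cancel_right]
    field_simp
    ring
  have hR : 0 ≤ R := (mem_sphere.1 hζ).symm ▸ dist_nonneg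
  rw [hdiff, norm_div, norm_mul, norm_mul, norm_mul, mem_sphere_iff_norm.1 hζ,
    Complex.norm_ofNat, sq]
  gcongr
  exacts [hgap v hv, hgap w hw]

theorem abs_sub_le_mul_circleAverage_abs {h : ℂ → ℝ} {a v w : ℂ} {ρ R : ℝ}
    (hh : InnerProductSpace.HarmonicOnNhd h (closedBall a R)) (hv : v ∈ closedBall a ρ)
    (hw : w ∈ closedBall a ρ) (hρ : ρ < R) :
    |h v - h w| ≤ 2 * R * ‖v - w‖ / (R - ρ) ^ 2 * circleAverage (fun z => |h z|) a R := by
  have hR : |R| = R := abs_of_pos ((dist_nonneg.trans hv).trans_lt hρ)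
  have hcont : ContinuousOn h (sphere a |R|) := fun z hz =>
    (hh z (sphere_subset_closedBall (hR ▸ hz))).1.continuousAt.continuousWithinAt
  have hball : closedBall a ρ ⊆ ball a R := closedBall_subset_ball hρ
  have hkernel : ∀ u ∈ closedBall a ρ,
      ContinuousOn (Complex.re ∘ herglotzRieszKernel a u • h) (sphere a |R|) := fun u hu =>
    (Complex.continuous_re.comp_continuousOn
      (continuousOn_herglotzRieszKernel_sphere (hball hu))).smul hcont
  rw [← hh.circleAverage_re_herglotzRieszKernel_smul (hball hv),
    ← hh.circleAverage_re_herglotzRieszKernel_smul (hball hw),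
    ← circleAverage_sub (hkernel v hv).circleIntegrable' (hkernel w hw).circleIntegrable',
    ← smul_eq_mul, ← circleAverage_smul]
  refine abs_circleAverage_le_circleAverage_abs.trans (circleAverage_mono
    ((hkernel v hv).sub (hkernel w hw)).abs.circleIntegrable'
    (hcont.abs.const_smul _).circleIntegrable' fun ζ hζ => ?_)
  calc
    |Complex.re (herglotzRieszKernel a v ζ) * h ζ - Complex.re (herglotzRieszKernel a w ζ) * h ζ|
      = |Complex.re (herglotzRieszKernel a v ζ - herglotzRieszKernel a w ζ)| * |h ζ| := by
        rw [← sub_mul, abs_mul, Complex.sub_re]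
    _ ≤ 2 * R * ‖v - w‖ / (R - ρ) ^ 2 * |h ζ| := by
        gcongr
        exact (Complex.abs_re_le_norm _).trans
          (norm_herglotzRieszKernel_sub_le hv hw hρ (hR ▸ hζ))

theorem posLog_add_posLog_inv (x : ℝ) : log⁺ x + log⁺ x⁻¹ = |log x| := by
  rw [← half_mul_log_add_log_abs, ← half_mul_log_add_log_abs, log_inv, abs_neg]
  ring

theorem log_one_add_le_rpow_div {s x : ℝ} (hs0 : 0 < s) (hs1 : s ≤ 1) (hx : 0 ≤ x) :
    log (1 + x) ≤ x ^ s / s := by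
  rw [le_div_iff₀' hs0]
  calc
    s * log (1 + x) = log ((1 + x) ^ s) := (log_rpow (by linarith) s).symm
    _ ≤ (1 + x) ^ s - 1 := log_le_sub_one_of_pos (by positivity)
    _ ≤ x ^ s := by
      have := rpow_add_le_add_rpow zero_le_one hx hs0.le hs1
      rw [one_rpow] at this
      linarith

section NormedAddCommGroup

variable {E : Type*} [NormedAddCommGroup E] {x y : E} {s : ℝ}

theorem log_norm_sub_log_norm_le (hs0 : 0 < s) (hs1 : s ≤ 1) (hx : x ≠ 0) (hy : y ≠ 0) :
    log ‖y‖ - log ‖x‖ ≤ ‖y - x‖ ^ s / s * ‖x‖ ^ (-s) := by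
  have hx' := norm_pos_iff.2 hx
  have hy' := norm_pos_iff.2 hy
  have hratio : ‖y‖ / ‖x‖ ≤ 1 + ‖y - x‖ / ‖x‖ := by
    rw [div_le_iff₀ hx', add_mul, one_mul, div_mul_cancel₀ _ hx'.ne']
    exact norm_le_insert' y x
  calc
    log ‖y‖ - log ‖x‖ = log (‖y‖ / ‖x‖) := (log_div hy'.ne' hx'.ne').symm
    _ ≤ log (1 + ‖y - x‖ / ‖x‖) := log_le_log (by positivity) hratio
    _ ≤ (‖y - x‖ / ‖x‖) ^ s / s := log_one_add_le_rpow_div hs0 hs1 (by positivity)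
    _ = ‖y - x‖ ^ s / s * ‖x‖ ^ (-s) := by
      rw [div_rpow (norm_nonneg _) hx'.le, rpow_neg hx'.le]
      ring

theorem abs_log_norm_sub_log_norm_le (hs0 : 0 < s) (hs1 : s ≤ 1) (hx : x ≠ 0) (hy : y ≠ 0) :
    |log ‖y‖ - log ‖x‖| ≤ ‖y - x‖ ^ s / s * (‖x‖ ^ (-s) + ‖y‖ ^ (-s)) := by
  have hyx := log_norm_sub_log_norm_le hs0 hs1 hx hy
  have hxy := log_norm_sub_log_norm_le hs0 hs1 hy hx
  rw [norm_sub_rev x y] at hxy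
  have hx0 : 0 ≤ ‖y - x‖ ^ s / s * ‖x‖ ^ (-s) := by positivity
  have hy0 : 0 ≤ ‖y - x‖ ^ s / s * ‖y‖ ^ (-s) := by positivity
  rw [abs_le, mul_add]
  constructor <;> linarith

end NormedAddCommGroup

theorem circleAverage_abs_log_norm_sub_le {R : ℝ} (hR : 1 ≤ R) {u : ℂ} (hu : ‖u‖ ≤ R) :
    circleAverage (fun z => |log ‖z - u‖|) 0 R ≤ 2 * log (2 * R) := by
  have hR0 : |R| = R := abs_of_pos (zero_lt_one.trans_le hR)
  have hlog : CircleIntegrable (fun z => log ‖z - u‖) 0 R := circleIntegrable_log_norm_sub_const R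
  have hposLog : CircleIntegrable (fun z => log⁺ ‖z - u‖) 0 R :=
    MeromorphicOn.circleIntegrable_posLog_norm fun z _ => by fun_prop
  have hbound : ∀ z ∈ sphere (0 : ℂ) |R|, log⁺ ‖z - u‖ ≤ log (2 * R) := fun z hz => by
    rw [hR0, mem_sphere_zero_iff_norm] at hz
    have hle : ‖z - u‖ ≤ 2 * R := (norm_sub_le z u).trans (by linarith)
    rw [← posLog_eq_log (by rw [abs_of_pos] <;> linarith)]
    exact posLog_le_posLog (norm_nonneg _) hle
  have habs : (fun z : ℂ => |log ‖z - u‖|) =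
      (2 : ℝ) • (fun z => log⁺ ‖z - u‖) - fun z => log ‖z - u‖ := by
    funext z
    simp only [Pi.sub_apply, Pi.smul_apply, smul_eq_mul, ← half_mul_log_add_log_abs]
    ring
  rw [habs, circleAverage_sub hposLog.const_smul hlog, circleAverage_smul, smul_eq_mul,
    circleAverage_log_norm_sub_const_of_mem_closedBall (by simpa [hR0] using hu)]
  have := circleAverage_mono_on_of_le_circle hposLog hbound
  linarith [log_nonneg hR]

theorem circleAverage_abs_log_norm {f : ℂ → ℂ} (hf : Meromorphic f) (R : ℝ) :
    circleAverage (fun z => |log ‖f z‖|) 0 R =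
      ValueDistribution.proximity f ⊤ R + ValueDistribution.proximity f⁻¹ ⊤ R := by
  rw [ValueDistribution.proximity_top, ValueDistribution.proximity_top, ← circleAverage_fun_add
    (MeromorphicOn.circleIntegrable_posLog_norm fun z _ => hf z)
    (MeromorphicOn.circleIntegrable_posLog_norm fun z _ => (hf z).inv)]
  simp [posLog_add_posLog_inv]

/-- On the closed disc of radius `R`, `log ‖f‖` is the logarithmic potential of the weights `d` on
the finite set `S` plus the harmonic function `h`, as in the Poisson–Jensen formula. The identity is
only required off `S`, which may therefore contain, besides the zeros and poles of `f`, points where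
`f` takes an arbitrary value. -/
structure IsLogNormSplitting (f : ℂ → ℂ) (R : ℝ) (d : ℂ → ℝ) (S : Finset ℂ) (h : ℂ → ℝ) : Prop where
  norm_le : ∀ u ∈ S, ‖u‖ ≤ R
  harmonic : InnerProductSpace.HarmonicOnNhd h (closedBall 0 R)
  log_norm_eq : ∀ z ∈ closedBall (0 : ℂ) R, z ∉ S →
    log ‖f z‖ = ∑ u ∈ S, d u * log ‖z - u‖ + h z

theorem exists_isLogNormSplitting {f : ℂ → ℂ} (hf : Meromorphic f)
    (hord : ∀ z, meromorphicOrderAt f z ≠ ⊤) (R : ℝ) :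
    ∃ S h, IsLogNormSplitting f R (fun u => MeromorphicOn.divisor f Set.univ u) S h := by
  have hfU : MeromorphicOn f (closedBall 0 R) := fun z _ => hf z
  have hsupp : (MeromorphicOn.divisor f (closedBall 0 R)).support.Finite :=
    (MeromorphicOn.divisor f (closedBall 0 R)).finiteSupport (isCompact_closedBall 0 R)
  obtain ⟨g, hg, hg0, hfg⟩ := hfU.extract_zeros_poles (fun z => hord z) hsupp
  have hexc := (isCompact_closedBall (0 : ℂ) R).finite_sdiff_of_mem_codiscreteWithin
    (MeromorphicOn.extract_zeros_poles_log hg0 hfg)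
  have hsuppS : (MeromorphicOn.divisor f (closedBall 0 R)).support ⊆
      ↑(hsupp.toFinset ∪ hexc.toFinset) := by simp
  have hball : ∀ u ∈ hsupp.toFinset ∪ hexc.toFinset, u ∈ closedBall (0 : ℂ) R := fun u hu => by
    rcases Finset.mem_union.1 hu with hu | hu
    · exact (MeromorphicOn.divisor f _).supportWithinDomain (hsupp.mem_toFinset.1 hu)
    · exact (hexc.mem_toFinset.1 hu).1
  refine ⟨hsupp.toFinset ∪ hexc.toFinset, fun z => log ‖g z‖, fun u hu => by simpa using hball u hu,
    fun z hz => (hg z hz).harmonicAt_log_norm (hg0 ⟨z, hz⟩), fun z hz hzS => ?_⟩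
  have hlog := not_not.1 fun hne => hzS
    (Finset.mem_union_right _ (hexc.mem_toFinset.2 ⟨hz, hne⟩))
  refine hlog.trans (congrArg (· + log ‖g z‖) ?_)
  refine (congrFun (finsum_eq_sum_of_support_subset _
    (Set.Subset.trans (fun u hu => ?_) hsuppS)) z).trans ?_
  · refine Function.mem_support.2 fun h0 => hu ?_
    simp only [h0, Int.cast_zero, zero_mul]
    rfl
  rw [Finset.sum_apply]
  refine Finset.sum_congr rfl fun u hu => ?_
  rw [MeromorphicOn.divisor_apply hfU (hball u hu),
    MeromorphicOn.divisor_apply (fun z _ => hf z) (Set.mem_univ u)]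

namespace IsLogNormSplitting

variable {f : ℂ → ℂ} {R r s : ℝ} {d : ℂ → ℝ} {S : Finset ℂ} {h : ℂ → ℝ} {c z : ℂ}

theorem circleAverage_abs_le (H : IsLogNormSplitting f R d S h) (hf : Meromorphic f)
    (hR : 1 ≤ R) :
    circleAverage (fun z => |h z|) 0 R ≤
      ValueDistribution.proximity f ⊤ R + ValueDistribution.proximity f⁻¹ ⊤ R +
        (∑ u ∈ S, |d u|) * (2 * log (2 * R)) := by
  have hR0 : |R| = R := abs_of_pos (by linarith)
  have hh : CircleIntegrable (fun z => |h z|) 0 R := ContinuousOn.circleIntegrable' fun z hz =>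
    (H.harmonic z (sphere_subset_closedBall (hR0 ▸ hz))).1.continuousAt.abs.continuousWithinAt
  have hlogf : CircleIntegrable (fun z => |log ‖f z‖|) 0 R :=
    (MeromorphicOn.circleIntegrable_log_norm fun z _ => hf z).abs
  have hterm : ∀ u ∈ S, CircleIntegrable (fun z => |d u| • |log ‖z - u‖|) 0 R := fun u _ =>
    CircleIntegrable.const_smul (circleIntegrable_log_norm_sub_const R).abs
  have hsum := CircleIntegrable.fun_sum S hterm
  calc
    circleAverage (fun z => |h z|) 0 R
      ≤ circleAverage (fun z => |log ‖f z‖| + ∑ u ∈ S, |d u| • |log ‖z - u‖|) 0 R := by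
        refine circleAverage_mono_of_countable S.countable_toSet (by linarith) hh
          (hlogf.add hsum) fun z hz hzS => ?_
        have hsplit := H.log_norm_eq z (sphere_subset_closedBall (hR0 ▸ hz)) hzS
        rw [show h z = log ‖f z‖ - ∑ u ∈ S, d u * log ‖z - u‖ by linarith]
        refine (abs_sub _ _).trans (add_le_add_right (S.abs_sum_le_sum_abs _ |>.trans_eq ?_) _)
        simp [abs_mul]
    _ = circleAverage (fun z => |log ‖f z‖|) 0 R +
          ∑ u ∈ S, |d u| * circleAverage (fun z => |log ‖z - u‖|) 0 R := by
        rw [circleAverage_fun_add hlogf hsum, circleAverage_fun_sum hterm]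
        simp_rw [circleAverage_fun_smul, smul_eq_mul]
    _ ≤ _ := by
        rw [circleAverage_abs_log_norm hf, Finset.sum_mul]
        gcongr with u hu
        exact circleAverage_abs_log_norm_sub_le hR (H.norm_le u hu)

theorem posLog_norm_div_le (H : IsLogNormSplitting f R d S h) (hs0 : 0 < s) (hs1 : s ≤ 1)
    (hz : z ∈ closedBall 0 R) (hzS : z ∉ S) (hzc : z + c ∈ closedBall 0 R) (hzcS : z + c ∉ S) :
    log⁺ ‖f (z + c) / f z‖ ≤ |h (z + c) - h z| +
      ∑ u ∈ S, (|d u| * (‖c‖ ^ s / s)) • (‖z - u‖ ^ (-s) + ‖z - (u - c)‖ ^ (-s)) := by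
  rcases eq_or_ne (f z) 0 with hfz | hfz
  · simp only [hfz, div_zero, norm_zero, posLog_zero]
    positivity
  rcases eq_or_ne (f (z + c)) 0 with hfzc | hfzc
  · simp only [hfzc, zero_div, norm_zero, posLog_zero]
    positivity
  have hterm : ∀ u ∈ S, d u * log ‖z + c - u‖ - d u * log ‖z - u‖ ≤
      (|d u| * (‖c‖ ^ s / s)) • (‖z - u‖ ^ (-s) + ‖z - (u - c)‖ ^ (-s)) := fun u hu => by
    have hne : ∀ w ∉ S, w - u ≠ 0 := fun w hw h0 => hw (sub_eq_zero.1 h0 ▸ hu)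
    have hdiff := abs_log_norm_sub_log_norm_le hs0 hs1 (hne z hzS) (hne _ hzcS)
    rw [show z + c - u - (z - u) = c by ring] at hdiff
    rw [show z - (u - c) = z + c - u by ring, smul_eq_mul, mul_assoc, ← mul_sub]
    refine (le_abs_self _).trans ?_
    rw [abs_mul]
    gcongr
  refine max_le (by positivity) ?_
  calc
    log ‖f (z + c) / f z‖ = log ‖f (z + c)‖ - log ‖f z‖ := by
      rw [norm_div, log_div (norm_ne_zero_iff.2 hfzc) (norm_ne_zero_iff.2 hfz)]
    _ = h (z + c) - h z + ∑ u ∈ S, (d u * log ‖z + c - u‖ - d u * log ‖z - u‖) := by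
      rw [H.log_norm_eq _ hz hzS, H.log_norm_eq _ hzc hzcS, Finset.sum_sub_distrib]
      ring
    _ ≤ _ := add_le_add (le_abs_self _) (Finset.sum_le_sum hterm)

theorem circleAverage_posLog_norm_div_le_add (H : IsLogNormSplitting f R d S h)
    (hf : Meromorphic f) (hs0 : 0 < s) (hs1 : s < 1) (hr : 0 < r) (hR : r + ‖c‖ ≤ R) {A : ℝ}
    (hA : ∀ z ∈ sphere 0 r, |h (z + c) - h z| ≤ A) :
    circleAverage (fun z => log⁺ ‖f (z + c) / f z‖) 0 r ≤
      A + (∑ u ∈ S, |d u|) * (‖c‖ ^ s / s *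
        (2 * (r ^ (-s) * ((2 * π)⁻¹ * ∫ θ in 0..2 * π, |sin θ| ^ (-s))))) := by
  have hpow := circleIntegrable_norm_sub_rpow (p := -s) (by linarith) (by linarith) hr
  have hterm : ∀ u ∈ S, CircleIntegrable (fun z =>
      (|d u| * (‖c‖ ^ s / s)) • (‖z - u‖ ^ (-s) + ‖z - (u - c)‖ ^ (-s))) 0 r := fun u _ =>
    ((hpow u).add (hpow (u - c))).const_smul
  have hsum := CircleIntegrable.fun_sum S hterm
  have hquot : CircleIntegrable (fun z => log⁺ ‖f (z + c) / f z‖) 0 r :=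
    MeromorphicOn.circleIntegrable_posLog_norm (f := fun z => f (z + c) / f z) fun z _ =>
      (MeromorphicAt.comp_analyticAt (g := (· + c)) (hf (z + c)) (by fun_prop)).div (hf z)
  have hX : ((S : Set ℂ) ∪ (· + c) ⁻¹' S).Countable :=
    S.countable_toSet.union (S.countable_toSet.preimage (add_left_injective c))
  calc
    circleAverage (fun z => log⁺ ‖f (z + c) / f z‖) 0 r
      ≤ circleAverage (fun z => A + ∑ u ∈ S,
          (|d u| * (‖c‖ ^ s / s)) • (‖z - u‖ ^ (-s) + ‖z - (u - c)‖ ^ (-s))) 0 r := by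
        refine circleAverage_mono_of_countable hX hr.ne' hquot
          ((circleIntegrable_const A 0 r).add hsum) fun z hz hzX => ?_
        rw [abs_of_pos hr] at hz
        rw [Set.mem_union, not_or] at hzX
        have hzr := mem_sphere_zero_iff_norm.1 hz
        refine (H.posLog_norm_div_le hs0 hs1.le ?_ hzX.1 ?_ hzX.2).trans
          (add_le_add_left (hA z hz) _)
        · exact mem_closedBall_zero_iff.2 (by linarith [norm_nonneg c])
        · exact mem_closedBall_zero_iff.2 ((norm_add_le z c).trans (by linarith))
    _ = A + ∑ u ∈ S, |d u| * (‖c‖ ^ s / s * (circleAverage (fun z => ‖z - u‖ ^ (-s)) 0 r +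
          circleAverage (fun z => ‖z - (u - c)‖ ^ (-s)) 0 r)) := by
        rw [circleAverage_fun_add (circleIntegrable_const A 0 r) hsum, circleAverage_const,
          circleAverage_fun_sum hterm]
        simp_rw [circleAverage_fun_smul, circleAverage_fun_add (hpow _) (hpow _), smul_eq_mul,
          mul_assoc]
    _ ≤ _ := by
        have havg := circleAverage_norm_sub_rpow_le (p := -s) (by linarith) (by linarith) hr
        rw [Finset.sum_mul, two_mul (r ^ (-s) * _)]
        gcongr
        exacts [havg _, havg _]

theorem circleAverage_posLog_norm_div_le (H : IsLogNormSplitting f R d S h) (hf : Meromorphic f)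
    (hs0 : 0 < s) (hs1 : s < 1) (hr : 0 < r) (hR : r + ‖c‖ < R) (hR1 : 1 ≤ R) :
    circleAverage (fun z => log⁺ ‖f (z + c) / f z‖) 0 r ≤
      2 * R * ‖c‖ / (R - (r + ‖c‖)) ^ 2 *
        (ValueDistribution.proximity f ⊤ R + ValueDistribution.proximity f⁻¹ ⊤ R +
          (∑ u ∈ S, |d u|) * (2 * log (2 * R))) +
      (∑ u ∈ S, |d u|) * (‖c‖ ^ s / s *
        (2 * (r ^ (-s) * ((2 * π)⁻¹ * ∫ θ in 0..2 * π, |sin θ| ^ (-s))))) := by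
  refine H.circleAverage_posLog_norm_div_le_add hf hs0 hs1 hr hR.le fun z hz => ?_
  have hzr := mem_sphere_zero_iff_norm.1 hz
  have hz : z ∈ closedBall (0 : ℂ) (r + ‖c‖) :=
    mem_closedBall_zero_iff.2 (by linarith [norm_nonneg c])
  have hzc : z + c ∈ closedBall (0 : ℂ) (r + ‖c‖) :=
    mem_closedBall_zero_iff.2 ((norm_add_le z c).trans (by linarith))
  refine (abs_sub_le_mul_circleAverage_abs H.harmonic hzc hz hR).trans ?_
  rw [add_sub_cancel_left]
  gcongr
  exact H.circleAverage_abs_le hf hR1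

end IsLogNormSplitting

theorem sum_mul_log_div_le_logCounting {E : Type*} [NormedAddCommGroup E] [ProperSpace E]
    {D : Function.locallyFinsupp E ℤ} (hD : 0 ≤ D) {R R' : ℝ} (hR : 1 ≤ R) (hRR' : R ≤ R')
    {S : Finset E} (hS : ∀ z ∈ S, ‖z‖ ≤ R) :
    (∑ z ∈ S, (D z : ℝ)) * log (R' / R) ≤ Function.locallyFinsuppWithin.logCounting D R' := by
  classical
  have hsub : ∑ z ∈ S, Function.locallyFinsuppWithin.single z (D z) ≤ D := fun z => by
    simp only [Function.locallyFinsuppWithin.coe_sum, Finset.sum_apply,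
      Function.locallyFinsuppWithin.single_apply, Finset.sum_ite_eq]
    split_ifs
    exacts [le_rfl, hD z]
  refine le_trans ?_ (Function.locallyFinsuppWithin.logCounting_le hsub (hR.trans hRR'))
  rw [map_sum, Finset.sum_apply, Finset.sum_mul]
  refine Finset.sum_le_sum fun z hz => ?_
  rw [Function.locallyFinsuppWithin.logCounting_single_eq_log_sub_const ((hS z hz).trans hRR'),
    log_div (by linarith) (by linarith)]
  have hlog : log ‖z‖ ≤ log R := by
    rcases eq_or_ne z 0 with rfl | hz0
    · simpa using log_nonneg hR
    · exact log_le_log (norm_pos_iff.2 hz0) (hS z hz)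
  have : (0 : ℝ) ≤ D z := mod_cast hD z
  gcongr

theorem sum_abs_divisor_mul_log_div_le {f : ℂ → ℂ} {R R' : ℝ} (hR : 1 ≤ R) (hRR' : R ≤ R')
    {S : Finset ℂ} (hS : ∀ z ∈ S, ‖z‖ ≤ R) :
    (∑ z ∈ S, |(MeromorphicOn.divisor f Set.univ z : ℝ)|) * log (R' / R) ≤
      ValueDistribution.logCounting f ⊤ R' + ValueDistribution.logCounting f⁻¹ ⊤ R' := by
  have hpoles := sum_mul_log_div_le_logCounting
    (negPart_nonneg (MeromorphicOn.divisor f Set.univ)) hR hRR' hS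
  have hzeros := sum_mul_log_div_le_logCounting
    (posPart_nonneg (MeromorphicOn.divisor f Set.univ)) hR hRR' hS
  rw [ValueDistribution.logCounting_inv, ValueDistribution.logCounting_top,
    ValueDistribution.logCounting_zero]
  refine Eq.trans_le ?_ (add_le_add hpoles hzeros)
  rw [← add_mul, ← Finset.sum_add_distrib]
  congr! 2 with z
  rw [Function.locallyFinsuppWithin.negPart_apply, Function.locallyFinsuppWithin.posPart_apply,
    add_comm, ← Int.cast_add, posPart_add_negPart, Int.cast_abs]

theorem eventuallyEq_const_of_meromorphicOrderAt_sub_eq_top {f : ℂ → ℂ} (hf : Meromorphic f)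
    {a z : ℂ} (hz : meromorphicOrderAt (fun w => f w - a) z = ⊤) :
    f =ᶠ[codiscrete ℂ] fun _ => a := by
  have hfa : Meromorphic fun w => f w - a := fun w => (hf w).sub (.const a w)
  have htop : ∀ w, meromorphicOrderAt (fun w => f w - a) w = ⊤ := by
    by_contra! h
    exact hfa.exists_meromorphicOrderAt_ne_top_iff_forall.1 h z hz
  refine mem_codiscrete.2 fun w => ?_
  rw [disjoint_principal_right, compl_compl]
  filter_upwards [meromorphicOrderAt_eq_top_iff.1 (htop w)] with v hv using sub_eq_zero.1 hv

theorem tendsto_logCounting_top_atTop_of_neg_divisor {f : ℂ → ℂ} {z : ℂ}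
    (hz : MeromorphicOn.divisor f Set.univ z < 0) :
    Tendsto (ValueDistribution.logCounting f ⊤) atTop atTop := by
  have hneg : 1 ≤ (MeromorphicOn.divisor f Set.univ)⁻ z := by
    rw [Function.locallyFinsuppWithin.negPart_apply, negPart_of_nonpos hz.le]
    lia
  refine tendsto_atTop_mono' atTop ?_
    (tendsto_atTop_add_const_right _ (-log ‖z‖) tendsto_log_atTop)
  filter_upwards [eventually_ge_atTop 1, eventually_ge_atTop ‖z‖] with r hr hzr
  have hsingle : Function.locallyFinsuppWithin.single z 1 ≤ (MeromorphicOn.divisor f Set.univ)⁻ :=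
    fun w => by
      rw [Function.locallyFinsuppWithin.single_apply]
      split_ifs with hwz
      · exact hwz ▸ hneg
      · exact negPart_nonneg (MeromorphicOn.divisor f Set.univ) w
  rw [ValueDistribution.logCounting_top]
  refine Eq.trans_le ?_ (Function.locallyFinsuppWithin.logCounting_le hsingle hr)
  rw [Function.locallyFinsuppWithin.logCounting_single_eq_log_sub_const hzr]
  ring

theorem tendsto_characteristic_top_atTop {f : ℂ → ℂ} (hf : Meromorphic f)
    (hconst : ¬∃ a, f =ᶠ[codiscrete ℂ] fun _ => a) :
    Tendsto (ValueDistribution.characteristic f ⊤) atTop atTop := by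
  obtain ⟨z, hz⟩ := (hf 0).eventually_analyticAt.exists
  set g : ℂ → ℂ := fun w => f w - f z
  have hgm : Meromorphic g := fun w => (hf w).sub (.const _ w)
  have hga : AnalyticAt ℂ g z := hz.sub analyticAt_const
  have hpole : MeromorphicOn.divisor g⁻¹ Set.univ z < 0 := by
    rw [MeromorphicOn.divisor_apply (fun w _ => (hgm w).inv) (Set.mem_univ z),
      meromorphicOrderAt_inv]
    have hpos : 0 < meromorphicOrderAt g z := hga.meromorphicOrderAt_nonneg.lt_of_ne'
      fun h0 => hga.meromorphicNFAt.meromorphicOrderAt_eq_zero_iff.1 h0 (sub_self _)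
    have hfin : meromorphicOrderAt g z ≠ ⊤ := fun htop =>
      hconst ⟨_, eventuallyEq_const_of_meromorphicOrderAt_sub_eq_top hf htop⟩
    lift meromorphicOrderAt g z to ℤ using hfin with n
    rw [WithTop.untop₀_neg, WithTop.untop₀_coe]
    exact neg_lt_zero.2 (WithTop.coe_pos.1 hpos)
  set C := log⁺ ‖f z‖ + log 2 +
    max |log ‖g 0‖| |log ‖meromorphicTrailingCoeffAt g 0‖|
  refine tendsto_atTop_mono (fun r => ?_) (tendsto_atTop_add_const_right _ (-C)
    (tendsto_logCounting_top_atTop_of_neg_divisor hpole))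
  have hprox : 0 ≤ ValueDistribution.proximity g⁻¹ ⊤ r :=
    ValueDistribution.proximity_nonneg (a := ⊤) r
  have hinv := abs_le.1 (ValueDistribution.characteristic_sub_characteristic_inv_le hgm (R := r))
  have hshift := abs_le.1 (ValueDistribution.abs_characteristic_sub_characteristic_shift_le
    (a₀ := f z) (r := r) hf)
  simp only [ValueDistribution.characteristic, Pi.add_apply] at *
  linarith [hinv.1, hshift.1]

theorem exists_proximity_add_inv_le_and_logCounting_add_inv_le {f : ℂ → ℂ} (hf : Meromorphic f) :
    ∃ C, 0 ≤ C ∧ ∀ r, 1 ≤ r → 1 ≤ ValueDistribution.characteristic f ⊤ r →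
      ValueDistribution.proximity f ⊤ r + ValueDistribution.proximity f⁻¹ ⊤ r ≤
          C * ValueDistribution.characteristic f ⊤ r ∧
        ValueDistribution.logCounting f ⊤ r + ValueDistribution.logCounting f⁻¹ ⊤ r ≤
          C * ValueDistribution.characteristic f ⊤ r := by
  set C := max |log ‖f 0‖| |log ‖meromorphicTrailingCoeffAt f 0‖|
  have hC0 : 0 ≤ C := (abs_nonneg _).trans (le_max_left _ _)
  refine ⟨2 + C, by positivity, fun r hr hT => ?_⟩
  have hinv := abs_le.1 (ValueDistribution.characteristic_sub_characteristic_inv_le hf (R := r))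
  have hCT := le_mul_of_one_le_right hC0 hT
  have hm : 0 ≤ ValueDistribution.proximity f ⊤ r := ValueDistribution.proximity_nonneg (a := ⊤) r
  have hm' : 0 ≤ ValueDistribution.proximity f⁻¹ ⊤ r :=
    ValueDistribution.proximity_nonneg (a := ⊤) r
  have hN : 0 ≤ ValueDistribution.logCounting f ⊤ r := ValueDistribution.logCounting_nonneg hr
  have hN' : 0 ≤ ValueDistribution.logCounting f⁻¹ ⊤ r := ValueDistribution.logCounting_nonneg hr
  simp only [ValueDistribution.characteristic, Pi.add_apply] at hinv hCT ⊢
  constructor <;> linarith [hinv.1]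

theorem proximity_shift_div_le {f : ℂ → ℂ} (hf : Meromorphic f)
    (hord : ∀ z, meromorphicOrderAt f z ≠ ⊤) {c : ℂ} {s r R R' A : ℝ} (hs0 : 0 < s) (hs1 : s < 1)
    (hr : 0 < r) (hrR : r + ‖c‖ < R) (hR : 1 ≤ R) (hRR' : R < R')
    (hprox : ValueDistribution.proximity f ⊤ R + ValueDistribution.proximity f⁻¹ ⊤ R ≤ A)
    (hcount : ValueDistribution.logCounting f ⊤ R' + ValueDistribution.logCounting f⁻¹ ⊤ R' ≤ A) :
    ValueDistribution.proximity (fun z => f (z + c) / f z) ⊤ r ≤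
      A * (2 * ‖c‖ * (R / (R - (r + ‖c‖)) ^ 2 * (1 + 2 * (log (2 * R) / log (R' / R)))) +
        ‖c‖ ^ s / s * (2 * ((2 * π)⁻¹ * ∫ θ in 0..2 * π, |sin θ| ^ (-s))) *
          (r ^ (-s) / log (R' / R))) := by
  obtain ⟨S, h, H⟩ := exists_isLogNormSplitting hf hord R
  set n := ∑ u ∈ S, |(MeromorphicOn.divisor f Set.univ u : ℝ)|
  set K := (2 * π)⁻¹ * ∫ θ in 0..2 * π, |sin θ| ^ (-s)
  have hK0 : 0 ≤ K := mul_nonneg (by positivity)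
    (intervalIntegral.integral_nonneg (by positivity) fun θ _ => by positivity)
  set L := log (R' / R)
  have hL0 : 0 < L := log_pos ((one_lt_div (by linarith)).2 hRR')
  have hn : n ≤ A / L := (le_div_iff₀ hL0).2
    ((sum_abs_divisor_mul_log_div_le hR hRR'.le H.norm_le).trans hcount)
  have hlog : 0 ≤ log (2 * R) := log_nonneg (by linarith)
  rw [ValueDistribution.proximity_top]
  calc
    circleAverage (fun z => log⁺ ‖f (z + c) / f z‖) 0 r
      ≤ 2 * R * ‖c‖ / (R - (r + ‖c‖)) ^ 2 *
          (ValueDistribution.proximity f ⊤ R + ValueDistribution.proximity f⁻¹ ⊤ R +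
            n * (2 * log (2 * R))) + n * (‖c‖ ^ s / s * (2 * (r ^ (-s) * K))) :=
        H.circleAverage_posLog_norm_div_le hf hs0 hs1 hr hrR hR
    _ ≤ 2 * R * ‖c‖ / (R - (r + ‖c‖)) ^ 2 * (A + A / L * (2 * log (2 * R))) +
          A / L * (‖c‖ ^ s / s * (2 * (r ^ (-s) * K))) := by gcongr
    _ = _ := by ring

section StepSize

variable {ε ρ : ℝ}

theorem div_sub_sq_le_of_add_rpow (hε : 0 ≤ ε) (hρ : 1 ≤ ρ) :
    (ρ + ρ ^ (1 - ε) / 2) / (ρ + ρ ^ (1 - ε) / 2 - ρ) ^ 2 ≤ 8 * ρ ^ (2 * ε - 1) := by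
  have hρ0 : 0 < ρ := by linarith
  have hstep : ρ ^ (1 - ε) ≤ ρ := (rpow_le_rpow_of_exponent_le hρ (by linarith)).trans_eq
    (rpow_one ρ)
  have hsq : ρ ^ (2 * ε - 1) * (ρ ^ (1 - ε)) ^ 2 = ρ := by
    rw [← rpow_natCast (ρ ^ (1 - ε)), ← rpow_mul hρ0.le, ← rpow_add hρ0]
    convert rpow_one ρ using 2
    push_cast
    ring
  rw [add_sub_cancel_left, div_le_iff₀ (by positivity), div_pow]
  linarith

theorem inv_log_div_le_of_add_rpow (hε : 0 ≤ ε) (hρ : 1 ≤ ρ) :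
    (log ((ρ + ρ ^ (1 - ε)) / (ρ + ρ ^ (1 - ε) / 2)))⁻¹ ≤ 4 * ρ ^ ε := by
  have hρ0 : 0 < ρ := by linarith
  have hstep : ρ ^ (1 - ε) ≤ ρ := (rpow_le_rpow_of_exponent_le hρ (by linarith)).trans_eq
    (rpow_one ρ)
  have hsplit : ρ ^ ε * ρ ^ (1 - ε) = ρ := by
    rw [← rpow_add hρ0, add_sub_cancel, rpow_one]
  rw [← inv_inv (4 * ρ ^ ε)]
  gcongr
  calc
    (4 * ρ ^ ε)⁻¹ ≤ 1 - ((ρ + ρ ^ (1 - ε)) / (ρ + ρ ^ (1 - ε) / 2))⁻¹ := by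
      rw [inv_div, one_sub_div (by positivity), inv_eq_one_div,
        div_le_div_iff₀ (by positivity) (by positivity)]
      linarith
    _ ≤ _ := one_sub_inv_le_log_of_pos (by positivity)

theorem div_sub_sq_mul_le_of_add_rpow (hε : 0 ≤ ε) (hρ : 1 ≤ ρ) (hlog : log (4 * ρ) ≤ ρ ^ ε) :
    (ρ + ρ ^ (1 - ε) / 2) / (ρ + ρ ^ (1 - ε) / 2 - ρ) ^ 2 *
        (1 + 2 * (log (2 * (ρ + ρ ^ (1 - ε) / 2)) /
          log ((ρ + ρ ^ (1 - ε)) / (ρ + ρ ^ (1 - ε) / 2)))) ≤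
      72 * ρ ^ (4 * ε - 1) := by
  have hρ0 : 0 < ρ := by linarith
  have hstep : ρ ^ (1 - ε) ≤ ρ := (rpow_le_rpow_of_exponent_le hρ (by linarith)).trans_eq
    (rpow_one ρ)
  have hlogR : log (2 * (ρ + ρ ^ (1 - ε) / 2)) ≤ ρ ^ ε :=
    (log_le_log (by positivity) (by linarith)).trans hlog
  have hinv := inv_log_div_le_of_add_rpow hε hρ
  have hinv0 : 0 ≤ (log ((ρ + ρ ^ (1 - ε)) / (ρ + ρ ^ (1 - ε) / 2)))⁻¹ :=
    inv_nonneg.2 (log_nonneg ((one_le_div (by positivity)).2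
      (by linarith [rpow_nonneg hρ0.le (1 - ε)])))
  have hlogR0 : 0 ≤ log (2 * (ρ + ρ ^ (1 - ε) / 2)) :=
    log_nonneg (by linarith [rpow_nonneg hρ0.le (1 - ε)])
  have hone : 1 ≤ ρ ^ (2 * ε) := one_le_rpow hρ (by positivity)
  calc
    _ ≤ 8 * ρ ^ (2 * ε - 1) * (1 + 2 * (ρ ^ ε * (4 * ρ ^ ε))) := by
      rw [div_eq_mul_inv (log _)]
      gcongr
      exact div_sub_sq_le_of_add_rpow hε hρ
    _ = 8 * ρ ^ (2 * ε - 1) * (1 + 8 * ρ ^ (2 * ε)) := by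
      rw [two_mul ε, rpow_add hρ0]
      ring
    _ ≤ 8 * ρ ^ (2 * ε - 1) * (9 * ρ ^ (2 * ε)) := by
      gcongr
      linarith
    _ = 72 * ρ ^ (4 * ε - 1) := by
      rw [show 4 * ε - 1 = 2 * ε - 1 + 2 * ε by ring, rpow_add hρ0]
      ring

theorem rpow_div_log_div_le_of_add_rpow {r : ℝ} (hε : 0 ≤ ε) (hε1 : ε ≤ 1) (hr : 1 ≤ r)
    (hrρ : r ≤ ρ) (hρr : ρ ≤ 2 * r) :
    r ^ (-(1 - ε)) / log ((ρ + ρ ^ (1 - ε)) / (ρ + ρ ^ (1 - ε) / 2)) ≤ 8 * r ^ (4 * ε - 1) := by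
  have hr0 : 0 < r := by linarith
  calc
    _ ≤ r ^ (-(1 - ε)) * (4 * ρ ^ ε) := by
      rw [div_eq_mul_inv]
      gcongr
      exact inv_log_div_le_of_add_rpow hε (hr.trans hrρ)
    _ ≤ r ^ (-(1 - ε)) * (4 * (2 * r ^ ε)) := by
      gcongr
      calc
        ρ ^ ε ≤ (2 * r) ^ ε := rpow_le_rpow (by linarith) hρr hε
        _ = 2 ^ ε * r ^ ε := mul_rpow zero_le_two hr0.le
        _ ≤ 2 * r ^ ε := by
          gcongr
          exact (rpow_le_rpow_of_exponent_le one_le_two hε1).trans_eq (rpow_one 2)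
    _ = 8 * r ^ (2 * ε - 1) := by
      rw [show 2 * ε - 1 = -(1 - ε) + ε by ring, rpow_add hr0]
      ring
    _ ≤ 8 * r ^ (4 * ε - 1) := mul_le_mul_of_nonneg_left
      (rpow_le_rpow_of_exponent_le hr (by linarith)) (by norm_num)

theorem eventually_log_const_mul_le_rpow (hε : 0 < ε) {a : ℝ} (ha : 0 < a) :
    ∀ᶠ x in atTop, log (a * x) ≤ x ^ ε := by
  have hlog : ∀ᶠ x in atTop, ‖log x‖ ≤ 2⁻¹ * ‖x ^ ε‖ :=
    (isLittleO_log_rpow_atTop hε).bound (by norm_num)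
  filter_upwards [hlog, (tendsto_rpow_atTop hε).eventually_ge_atTop (2 * log a),
    eventually_gt_atTop 0] with x hx hax hx0
  rw [norm_of_nonneg (rpow_nonneg hx0.le ε)] at hx
  rw [log_mul ha.ne' hx0.ne']
  linarith [le_norm_self (log x)]

end StepSize

theorem proximity_shift_div_le_mul_rpow {f : ℂ → ℂ} (hf : Meromorphic f)
    (hord : ∀ z, meromorphicOrderAt f z ≠ ⊤) {c : ℂ} {ε r ρ A : ℝ} (hε : 0 < ε)
    (hε1 : ε ≤ 1 / 4) (hr : 1 ≤ r) (hcr : ‖c‖ ≤ r) (hρ : r + ‖c‖ = ρ)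
    (hlog : log (4 * ρ) ≤ ρ ^ ε)
    (hprox : ∀ R ∈ Set.Icc ρ (ρ + ρ ^ (1 - ε)),
      ValueDistribution.proximity f ⊤ R + ValueDistribution.proximity f⁻¹ ⊤ R ≤ A)
    (hcount : ValueDistribution.logCounting f ⊤ (ρ + ρ ^ (1 - ε)) +
      ValueDistribution.logCounting f⁻¹ ⊤ (ρ + ρ ^ (1 - ε)) ≤ A) :
    ValueDistribution.proximity (fun z => f (z + c) / f z) ⊤ r ≤
      A * (2 * ‖c‖ * 72 + ‖c‖ ^ (1 - ε) / (1 - ε) *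
        (2 * ((2 * π)⁻¹ * ∫ θ in 0..2 * π, |sin θ| ^ (-(1 - ε)))) * 8) * r ^ (4 * ε - 1) := by
  set M := ‖c‖ ^ (1 - ε) / (1 - ε) *
    (2 * ((2 * π)⁻¹ * ∫ θ in 0..2 * π, |sin θ| ^ (-(1 - ε))))
  have hM : 0 ≤ M := mul_nonneg (div_nonneg (by positivity) (by linarith)) (mul_nonneg zero_le_two
    (mul_nonneg (by positivity)
      (intervalIntegral.integral_nonneg (by positivity) fun θ _ => by positivity)))
  have hrρ : r ≤ ρ := hρ ▸ le_add_of_nonneg_right (norm_nonneg c)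
  have hstep : 0 < ρ ^ (1 - ε) := rpow_pos_of_pos (by linarith) _
  set R := ρ + ρ ^ (1 - ε) / 2 with hR
  set R' := ρ + ρ ^ (1 - ε)
  have hRR' : R < R' := by linarith
  have hRprox := hprox R ⟨by linarith, hRR'.le⟩
  have hA : 0 ≤ A := (add_nonneg (ValueDistribution.proximity_nonneg (a := ⊤) R)
    (ValueDistribution.proximity_nonneg (a := ⊤) R)).trans hRprox
  have hpow : ρ ^ (4 * ε - 1) ≤ r ^ (4 * ε - 1) :=
    rpow_le_rpow_of_nonpos (by linarith) hrρ (by linarith)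
  have hkernel : R / (R - ρ) ^ 2 * (1 + 2 * (log (2 * R) / log (R' / R))) ≤
      72 * r ^ (4 * ε - 1) :=
    (div_sub_sq_mul_le_of_add_rpow hε.le (hr.trans hrρ) hlog).trans (by linarith)
  have hpower : r ^ (-(1 - ε)) / log (R' / R) ≤ 8 * r ^ (4 * ε - 1) :=
    rpow_div_log_div_le_of_add_rpow hε.le (by linarith) hr hrρ (by linarith)
  calc
    ValueDistribution.proximity (fun z => f (z + c) / f z) ⊤ r
      ≤ A * (2 * ‖c‖ * (R / (R - ρ) ^ 2 * (1 + 2 * (log (2 * R) / log (R' / R)))) +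
          M * (r ^ (-(1 - ε)) / log (R' / R))) := by
        rw [← hρ]
        exact proximity_shift_div_le hf hord (by linarith) (by linarith) (by linarith)
          (by linarith) (by linarith) hRR' hRprox hcount
    _ ≤ A * (2 * ‖c‖ * (72 * r ^ (4 * ε - 1)) + M * (8 * r ^ (4 * ε - 1))) := by gcongr
    _ = _ := by ring

theorem exists_eventually_proximity_shift_div_le {f : ℂ → ℂ} (hf : Meromorphic f)
    (hconst : ¬∃ a, f =ᶠ[codiscrete ℂ] fun _ => a) (c : ℂ) {ε : ℝ} (hε : 0 < ε)
    (hε1 : ε ≤ 1 / 4) :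
    ∃ C, 0 ≤ C ∧ ∀ᶠ r in atTop, ValueDistribution.proximity (fun z => f (z + c) / f z) ⊤ r ≤
      C * ValueDistribution.characteristic f ⊤ (r + ‖c‖ + (r + ‖c‖) ^ (1 - ε)) *
        r ^ (4 * ε - 1) := by
  have hord : ∀ z, meromorphicOrderAt f z ≠ ⊤ := fun z hz =>
    hconst ⟨0, eventuallyEq_const_of_meromorphicOrderAt_sub_eq_top hf (by simpa using hz)⟩
  obtain ⟨B, hB0, hB⟩ := exists_proximity_add_inv_le_and_logCounting_add_inv_le hf
  have hsin : 0 ≤ ∫ θ in 0..2 * π, |sin θ| ^ (-(1 - ε)) :=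
    intervalIntegral.integral_nonneg (by positivity) fun θ _ => by positivity
  have hε1' : 0 ≤ 1 - ε := by linarith
  have hshift : Tendsto (fun r => r + ‖c‖) atTop atTop :=
    tendsto_atTop_add_const_right _ _ tendsto_id
  have hT1 := (tendsto_characteristic_top_atTop hf hconst).eventually_ge_atTop 1
  refine ⟨B * (2 * ‖c‖ * 72 + ‖c‖ ^ (1 - ε) / (1 - ε) *
    (2 * ((2 * π)⁻¹ * ∫ θ in 0..2 * π, |sin θ| ^ (-(1 - ε)))) * 8), by positivity, ?_⟩
  filter_upwards [eventually_ge_atTop 1, eventually_ge_atTop ‖c‖,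
    hshift.eventually (eventually_log_const_mul_le_rpow hε four_pos),
    hshift.eventually (eventually_forall_ge_atTop.2 hT1)] with r hr hcr hlog hT
  have hρ : 1 ≤ r + ‖c‖ := le_add_of_le_of_nonneg hr (norm_nonneg c)
  have hR' : r + ‖c‖ ≤ r + ‖c‖ + (r + ‖c‖) ^ (1 - ε) :=
    le_add_of_nonneg_right (by positivity)
  rw [mul_right_comm B]
  refine proximity_shift_div_le_mul_rpow hf hord hε hε1 hr hcr rfl hlog (fun R hR => ?_)
    (hB _ (hρ.trans hR') (hT _ hR')).2
  refine (hB R (hρ.trans hR.1) (hT R hR.1)).1.trans (mul_le_mul_of_nonneg_left ?_ hB0)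
  exact ValueDistribution.characteristic_monotoneOn hf (Set.mem_Ioi.2 (by linarith [hR.1]))
    (Set.mem_Ioi.2 (by linarith)) hR.2

theorem intervalIntegrable_indicator_Ici_inv {a : ℝ} (ha : 0 < a) (s t : ℝ) :
    IntervalIntegrable ((Set.Ici a).indicator (·⁻¹)) volume s t := by
  refine (intervalIntegrable_const (c := a⁻¹)).mono_fun'
    (measurable_inv.indicator measurableSet_Ici).aestronglyMeasurable (.of_forall fun x => ?_)
  simp only [Set.indicator_apply]
  split_ifs with hx
  · rw [norm_of_nonneg (inv_nonneg.2 (ha.le.trans hx))]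
    exact inv_anti₀ ha hx
  · rw [norm_zero]
    positivity

theorem integral_indicator_Ici_inv {a r : ℝ} (ha : 0 < a) (har : a ≤ r) :
    ∫ t in 0..r, (Set.Ici a).indicator (·⁻¹) t = log (r / a) := by
  have hinter : Set.Ioc 0 r ∩ Set.Ici a = Set.Icc a r := by
    ext t
    exact ⟨fun h => ⟨h.2, h.1.2⟩, fun h => ⟨⟨ha.trans_le h.1, h.2⟩, h.1⟩⟩
  rw [intervalIntegral.integral_of_le (ha.le.trans har), setIntegral_indicator measurableSet_Ici,
    hinter, integral_Icc_eq_integral_Ioc, ← intervalIntegral.integral_of_le har,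
    integral_inv_of_pos ha (ha.trans_le har)]

section LogCounting

variable {E : Type*} [NormedAddCommGroup E] {r t : ℝ} {S : Finset E}

theorem finsum_mem_closedBall_eq_sum_add {d : E → ℝ}
    (hS : ∀ z, z ∈ S ↔ z ≠ 0 ∧ ‖z‖ ≤ r ∧ d z ≠ 0) (ht0 : 0 ≤ t) (htr : t ≤ r) :
    ∑ᶠ z ∈ closedBall 0 t, d z = ∑ z ∈ S, d z * (Set.Ici ‖z‖).indicator 1 t + d 0 := by
  classical
  have hinter : closedBall 0 t ∩ Function.support d =
      ↑(insert 0 (S.filter (‖·‖ ≤ t))) ∩ Function.support d := by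
    ext z
    rcases eq_or_ne z 0 with rfl | hz
    · simp [ht0]
    · simp only [Set.mem_inter_iff, mem_closedBall_zero_iff, Function.mem_support,
        Finset.coe_insert, Finset.coe_filter, Set.mem_insert_iff, Set.mem_ofPred_eq, hS, hz]
      exact ⟨fun ⟨hzt, hdz⟩ => ⟨.inr ⟨⟨hz, hzt.trans htr, hdz⟩, hzt⟩, hdz⟩, by tauto⟩
  rw [finsum_mem_eq_sum_of_inter_support_eq _ hinter, Finset.sum_insert (by simp [hS]),
    Finset.sum_filter, add_comm]
  simp [Set.indicator_apply]

variable [ProperSpace E] (D : Function.locallyFinsupp E ℤ)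

theorem finite_setOf_norm_le_and_apply_ne_zero (r : ℝ) : {z | ‖z‖ ≤ r ∧ D z ≠ 0}.Finite := by
  refine ((D.toClosedBall r).finiteSupport (isCompact_closedBall 0 |r|)).subset
    fun z ⟨hzr, hz⟩ => ?_
  rwa [Function.mem_support, Function.locallyFinsuppWithin.toClosedBall_eval_within D
    (mem_closedBall_zero_iff.2 (hzr.trans (le_abs_self r)))]

theorem logCounting_eq_sum_add (hS : ∀ z, z ∈ S ↔ z ≠ 0 ∧ ‖z‖ ≤ r ∧ D z ≠ 0) (hr : 0 ≤ r) :
    Function.locallyFinsuppWithin.logCounting D r =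
      ∑ z ∈ S, D z * log (r / ‖z‖) + D 0 * log r := by
  change ∑ᶠ z, (D.toClosedBall r z : ℝ) * log (r * ‖z‖⁻¹) + D 0 * log r = _
  have hball : ∀ z : E, z ∈ closedBall 0 |r| ↔ ‖z‖ ≤ r := fun z => by
    rw [mem_closedBall_zero_iff, abs_of_nonneg hr]
  congr 1
  rw [finsum_eq_sum_of_support_subset (s := S)]
  · refine Finset.sum_congr rfl fun z hz => ?_
    rw [Function.locallyFinsuppWithin.toClosedBall_eval_within D ((hball z).2 ((hS z).1 hz).2.1),
      div_eq_mul_inv]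
  · intro z hz
    obtain ⟨hDz, hlog⟩ := mul_ne_zero_iff.1 hz
    have hDz := Int.cast_ne_zero.1 hDz
    have hzr : z ∈ closedBall 0 |r| := by
      by_contra h
      exact hDz (Function.locallyFinsuppWithin.apply_eq_zero_of_notMem _ h)
    rw [Function.locallyFinsuppWithin.toClosedBall_eval_within D hzr] at hDz
    exact (hS z).2 ⟨fun h0 => hlog (by simp [h0]), (hball z).1 hzr, hDz⟩

theorem logCounting_eq_integral_add (hr : 0 ≤ r) :
    Function.locallyFinsuppWithin.logCounting D r =
      (∫ t in 0..r, (∑ᶠ z ∈ closedBall 0 t, (D z : ℝ) - ∑ᶠ z ∈ closedBall 0 0, (D z : ℝ)) / t) +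
        (∑ᶠ z ∈ closedBall 0 0, (D z : ℝ)) * log r := by
  classical
  set S := (finite_setOf_norm_le_and_apply_ne_zero D r).toFinset.erase 0
  have hS : ∀ z, z ∈ S ↔ z ≠ 0 ∧ ‖z‖ ≤ r ∧ D z ≠ 0 := by simp [S]
  have hzero : ∑ᶠ z ∈ closedBall 0 0, (D z : ℝ) = D 0 := by simp
  have hintegrand : Set.EqOn
      (fun t => (∑ᶠ z ∈ closedBall 0 t, (D z : ℝ) - ∑ᶠ z ∈ closedBall 0 0, (D z : ℝ)) / t)
      (fun t => ∑ z ∈ S, D z * (Set.Ici ‖z‖).indicator (·⁻¹) t) (Set.uIcc 0 r) := fun t ht => by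
    rw [Set.uIcc_of_le hr] at ht
    simp only [hzero, finsum_mem_closedBall_eq_sum_add (d := fun z => (D z : ℝ)) (by simpa using hS)
      ht.1 ht.2, add_sub_cancel_right, Finset.sum_div, Set.indicator_apply, Pi.one_apply]
    refine Finset.sum_congr rfl fun z _ => ?_
    split_ifs <;> ring
  have hpos : ∀ z ∈ S, 0 < ‖z‖ := fun z hz => norm_pos_iff.2 ((hS z).1 hz).1
  rw [logCounting_eq_sum_add D hS hr, intervalIntegral.integral_congr hintegrand, hzero,
    intervalIntegral.integral_finsetSum fun z hz =>
      (intervalIntegrable_indicator_Ici_inv (hpos z hz) _ _).const_mul _]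
  congr 1
  refine Finset.sum_congr rfl fun z hz => ?_
  rw [intervalIntegral.integral_const_mul,
    integral_indicator_Ici_inv (hpos z hz) ((hS z).1 hz).2.1]

end LogCounting

theorem meromorphicOrderAt_sub_pow_mul {f : ℂ → ℂ} {x : ℂ} (hf : MeromorphicAt f x) (n : ℕ) :
    meromorphicOrderAt (fun w => (w - x) ^ n * f w) x = n + meromorphicOrderAt f x := by
  have hpow : MeromorphicAt (fun w : ℂ => (w - x) ^ n) x := by fun_prop
  have hord : meromorphicOrderAt (fun w : ℂ => (w - x) ^ n) x = (n : ℤ) :=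
    (meromorphicOrderAt_eq_int_iff hpow).2 ⟨fun _ => 1, analyticAt_const, one_ne_zero, by simp⟩
  exact (meromorphicOrderAt_mul hpow hf).trans (by rw [hord]; rfl)

theorem exists_analyticAt_sub_pow_mul_eventuallyEq_iff {f : ℂ → ℂ} {x : ℂ}
    (hf : MeromorphicAt f x) (n : ℕ) :
    (∃ g, AnalyticAt ℂ g x ∧ ∀ᶠ w in 𝓝[≠] x, (w - x) ^ n * f w = g w) ↔
      0 ≤ n + meromorphicOrderAt f x := by
  have hmul : MeromorphicAt (fun w => (w - x) ^ n * f w) x := by fun_prop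
  rw [← meromorphicOrderAt_sub_pow_mul hf]
  constructor
  · rintro ⟨g, hg, hfg⟩
    rw [meromorphicOrderAt_congr hfg]
    exact hg.meromorphicOrderAt_nonneg
  · intro hnonneg
    refine ⟨_, ?_, hmul.eq_nhdsNE_toMeromorphicNFAt⟩
    rwa [← meromorphicNFAt_toMeromorphicNFAt.meromorphicOrderAt_nonneg_iff_analyticAt,
      meromorphicOrderAt_congr hmul.eq_nhdsNE_toMeromorphicNFAt.symm]

theorem poleOrd_eq_negPart_untop₀ {f : ℂ → ℂ} {x : ℂ} (hf : MeromorphicAt f x) :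
    (poleOrd f x : ℤ) = (meromorphicOrderAt f x).untop₀⁻ := by
  simp only [poleOrd, exists_analyticAt_sub_pow_mul_eventuallyEq_iff hf]
  cases meromorphicOrderAt f x with
  | top => simp
  | coe m =>
    have hset : {n : ℕ | 0 ≤ (n : WithTop ℤ) + (m : WithTop ℤ)} = Set.Ici (m⁻).toNat := by
      ext n
      have hcast : (0 : WithTop ℤ) ≤ n + m ↔ 0 ≤ (n : ℤ) + m := by
        exact_mod_cast WithTop.coe_le_coe (α := ℤ)
      simp only [Set.mem_ofPred_eq, hcast, Set.mem_Ici, negPart_def]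
      lia
    rw [hset, csInf_Ici, WithTop.untop₀_coe, Int.toNat_of_nonneg (negPart_nonneg m)]

theorem nevn_eq_finsum_negPart_divisor {f : ℂ → ℂ} (hf : Meromorphic f) (r : ℝ) :
    (nevn f r : ℝ) =
      ∑ᶠ z ∈ closedBall 0 r, ((MeromorphicOn.divisor f Set.univ)⁻ z : ℝ) := by
  have hpole : ∀ z, (poleOrd f z : ℤ) = (MeromorphicOn.divisor f Set.univ)⁻ z := fun z => by
    rw [poleOrd_eq_negPart_untop₀ (hf z), Function.locallyFinsuppWithin.negPart_apply,
      MeromorphicOn.divisor_apply (fun w _ => hf w) (Set.mem_univ z)]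
  simp only [nevn, ← hpole, Int.cast_natCast]
  refine ((Nat.castAddMonoidHom ℝ).map_finsum_mem' ?_)
  refine (finite_setOf_norm_le_and_apply_ne_zero (MeromorphicOn.divisor f Set.univ)⁻ r).subset
    fun z ⟨hzr, hz⟩ => ⟨mem_closedBall_zero_iff.1 hzr, ?_⟩
  rwa [← hpole, Int.natCast_ne_zero]

theorem nevN_eq_logCounting {f : ℂ → ℂ} (hf : Meromorphic f) {r : ℝ} (hr : 0 ≤ r) :
    nevN f r = ValueDistribution.logCounting f ⊤ r := by
  simp only [nevN, nevn_eq_finsum_negPart_divisor hf, ValueDistribution.logCounting_top,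
    logCounting_eq_integral_add _ hr]

theorem nevm_eq_proximity (f : ℂ → ℂ) (r : ℝ) : nevm f r = ValueDistribution.proximity f ⊤ r := by
  simp [nevm, ValueDistribution.proximity_top, circleAverage, circ, circleMap, logPlus, posLog,
    max_comm]

theorem nevT_eq_characteristic {f : ℂ → ℂ} (hf : Meromorphic f) {r : ℝ} (hr : 0 ≤ r) :
    nevT f r = ValueDistribution.characteristic f ⊤ r := by
  rw [nevT, nevm_eq_proximity, nevN_eq_logCounting hf hr]
  rfl

theorem FiniteOrder.exists_eventually_nevT_le_rpow {f : ℂ → ℂ} (hf : FiniteOrder f) :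
    ∃ K : ℝ, 0 < K ∧ ∀ᶠ r in atTop, nevT f r ≤ r ^ K := by
  obtain ⟨K, hK⟩ := hf
  refine ⟨max K 1, by positivity, ?_⟩
  filter_upwards [eventually_map.1 hK, eventually_gt_atTop 1] with r hr hr1
  have hr0 : 0 < r := zero_lt_one.trans hr1
  rcases le_or_gt (nevT f r) 0 with hT | hT
  · exact hT.trans (by positivity)
  rw [← log_le_log_iff hT (by positivity), log_rpow hr0, ← div_le_iff₀ (log_pos hr1)]
  exact hr.trans (le_max_left K 1)

theorem tendsto_add_const_codiscrete {G : Type*} [TopologicalSpace G] [AddGroup G]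
    [ContinuousAdd G] (c : G) : Tendsto (· + c) (codiscrete G) (codiscrete G) := fun s hs => by
  rw [Filter.mem_map, mem_codiscrete'] at *
  refine ⟨hs.1.preimage (by fun_prop), ?_⟩
  rw [← Set.preimage_compl]
  exact hs.2.preimage (by fun_prop) (add_left_injective c)

theorem proximity_shift_div_eq_zero_of_eventuallyEq_const {f : ℂ → ℂ} {a : ℂ}
    (hf : f =ᶠ[codiscrete ℂ] fun _ => a) (c : ℂ) {r : ℝ} (hr : r ≠ 0) :
    ValueDistribution.proximity (fun z => f (z + c) / f z) ⊤ r = 0 := by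
  have hdiv : (fun z => f (z + c) / f z) =ᶠ[codiscrete ℂ] fun _ => a / a :=
    hf.mp (((tendsto_add_const_codiscrete c).eventually hf).mono fun z hzc hz => by
      simp only [hz, hzc])
  rw [ValueDistribution.proximity_congr_codiscrete hdiv hr, ValueDistribution.proximity_top]
  rcases eq_or_ne a 0 with rfl | ha <;> simp [circleAverage_const, *]

theorem exists_finLogMeasure_tendsto_proximity_shift_div {f : ℂ → ℂ} (hf : Meromorphic f)
    (hconst : ¬∃ a, f =ᶠ[codiscrete ℂ] fun _ => a) {K δ : ℝ} (hK : 0 < K)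
    (hgrowth : ∀ᶠ r in atTop, ValueDistribution.characteristic f ⊤ r ≤ r ^ K) (c : ℂ)
    (hδ : δ < 1) :
    ∃ E, FinLogMeasure E ∧ Tendsto (fun r =>
      ValueDistribution.proximity (fun z => f (z + c) / f z) ⊤ r /
        (ValueDistribution.characteristic f ⊤ (r + ‖c‖) / r ^ δ)) (atTop ⊓ 𝓟 Eᶜ) (𝓝 0) := by
  obtain ⟨ε, hε0, hε⟩ : ∃ ε, 0 < ε ∧ ε < min (1 / 4) ((1 - δ) / 4) :=
    exists_between (lt_min (by norm_num) (by linarith))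
  obtain ⟨hε1, hεδ⟩ := lt_min_iff.1 hε
  have hT := (tendsto_characteristic_top_atTop hf hconst).eventually_ge_atTop 1
  obtain ⟨C, hC0, hC⟩ := exists_eventually_proximity_shift_div_le hf hconst c hε0 hε1.le
  obtain ⟨F, hF, hdouble⟩ := exists_finLogMeasure_apply_add_rpow_le_two_mul hK hε0 (by linarith)
    (ValueDistribution.characteristic_monotoneOn hf) hT hgrowth
  obtain ⟨E, hE, hshift⟩ := hF.exists_tendsto_add_const (norm_nonneg c)
  have hlim : Tendsto (fun r : ℝ => 2 * C * r ^ (4 * ε - 1 + δ)) (atTop ⊓ 𝓟 Eᶜ) (𝓝 0) := by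
    rw [show 4 * ε - 1 + δ = -(1 - δ - 4 * ε) by ring, ← mul_zero (2 * C)]
    exact ((tendsto_rpow_neg_atTop (by linarith)).const_mul (2 * C)).mono_left inf_le_left
  refine ⟨E, hE, squeeze_zero' ?_ ?_ hlim⟩ <;>
    filter_upwards [hC.filter_mono inf_le_left, hshift.eventually hdouble,
      hshift.eventually (hT.filter_mono inf_le_left),
      (eventually_gt_atTop 0).filter_mono inf_le_left] with r hr hdouble hT hr0
  · have : 0 ≤ ValueDistribution.proximity (fun z => f (z + c) / f z) ⊤ r :=
      ValueDistribution.proximity_nonneg (a := ⊤) r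
    positivity
  · have hTpos := zero_lt_one.trans_le hT
    rw [div_div_eq_mul_div, div_le_iff₀ hTpos, rpow_add hr0]
    calc
      ValueDistribution.proximity (fun z => f (z + c) / f z) ⊤ r * r ^ δ
        ≤ C * (2 * ValueDistribution.characteristic f ⊤ (r + ‖c‖)) * r ^ (4 * ε - 1) * r ^ δ := by
          gcongr
          exact hr.trans (by gcongr)
      _ = _ := by ring

/-- **Difference analogue of the Lemma on the Logarithmic Derivative, finite order case.**
Let `f` be a non-constant meromorphic function on ℂ of finite order, `c ∈ ℂ` and `δ < 1`.
Then `m(r, f(z+c)/f(z)) = o(T(r+|c|, f) / r^δ)` as `r → ∞` outside a possible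
exceptional set of finite logarithmic measure. -/
theorem log_difference_lemma_finite_order (f : ℂ → ℂ) (hf : MeromorphicOn f Set.univ)
    (hnc : Nonconstant f) (hord : FiniteOrder f) (c : ℂ) (δ : ℝ) (hδ : δ < 1) :
    ∃ E : Set ℝ, FinLogMeasure E ∧
      Tendsto (fun r : ℝ => nevm (fun z => f (z + c) / f z) r /
          (nevT f (r + ‖c‖) / r ^ δ))
        (atTop ⊓ 𝓟 Eᶜ) (𝓝 0) := by
  have hmero : Meromorphic f := fun z => hf z (Set.mem_univ z)
  have hpos : ∀ E : Set ℝ, ∀ᶠ r in atTop ⊓ 𝓟 Eᶜ, 0 < r := fun E =>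
    (eventually_gt_atTop 0).filter_mono inf_le_left
  by_cases hconst : ∃ a, f =ᶠ[codiscrete ℂ] fun _ => a
  · obtain ⟨a, ha⟩ := hconst
    refine ⟨∅, ⟨Set.empty_subset _, by simp⟩, tendsto_const_nhds.congr' ?_⟩
    filter_upwards [hpos ∅] with r hr
    rw [nevm_eq_proximity, proximity_shift_div_eq_zero_of_eventuallyEq_const ha c hr.ne', zero_div]
  · obtain ⟨K, hK, hgrowth⟩ := hord.exists_eventually_nevT_le_rpow
    have hcharacteristic : ∀ᶠ r in atTop, ValueDistribution.characteristic f ⊤ r ≤ r ^ K := by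
      filter_upwards [hgrowth, eventually_ge_atTop 0] with r hr hr0
      rwa [← nevT_eq_characteristic hmero hr0]
    obtain ⟨E, hE, hlim⟩ := exists_finLogMeasure_tendsto_proximity_shift_div hmero hconst hK
      hcharacteristic c hδ
    refine ⟨E, hE, hlim.congr' ?_⟩
    filter_upwards [hpos E] with r hr
    rw [nevm_eq_proximity, nevT_eq_characteristic hmero (by positivity)]
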